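/- arXiv:2204.04496 — 3 statements merged into one kernel-verified Lean document; each statement's English description precedes it below -/
import Mathlib

section
/- Suppose y* = (x*, λ*, v*) ∈ Ω solves the variational inequality ⟨g(y*), y − y*⟩ ≤ 0 for all y ∈ Ω. Then x* is a minimizer of the linear program min { ⟨p(x*), X⟩ : (I − A)X ≥ c(λ*) componentwise, BX ≤ r(v*) componentwise, X ∈ ℝ₊ⁿ } and (λ*, v*) is a maximizer of the dual linear program max { ⟨c(λ*), Λ⟩ − ⟨r(v*), V⟩ : (I − A)ᵀΛ − BᵀV ≤ p(x*) componentwise, Λ ∈ ℝ₊ⁿ, V ∈ ℝ₊ᵐ }. -/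
/-!
Read the two programs as one linear program in symmetric form: the constraints are `M X ≥ b`, where
`M` stacks `I - A` on `-B` and `b` stacks `c(λ*)` on `-r(v*)`, and the dual variable is
`w* = (λ*, v*)`. Then `g(y*) = (Mᵀ w* - p(x*), b - M x*)`. A variational inequality over the
nonnegative orthant says that `g(y*) ≤ 0` and `⟨g(y*), y*⟩ = 0`. The former is primal and dual
feasibility. In the latter the bilinear terms cancel, which leaves `⟨b, w*⟩ = ⟨p(x*), x*⟩`, a zero
duality gap, so weak duality makes both points optimal.
-/

open Matrix Filter
open scoped BigOperators

noncomputable section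

/-- Vectors in ℝ^k. -/
abbrev Vec (k : ℕ) := Fin k → ℝ

/-- Standard Euclidean inner product on ℝ^k. -/
def ip {k : ℕ} (u v : Vec k) : ℝ := ∑ i, u i * v i

/-- Standard Euclidean norm on ℝ^k. -/
def nrm {k : ℕ} (u : Vec k) : ℝ := Real.sqrt (ip u u)

/-- The space ℝⁿ × ℝⁿ × ℝᵐ of triples y = (x, λ, v). -/
abbrev Triple (n m : ℕ) := Vec n × Vec n × Vec m

/-- Euclidean inner product on the triple space. -/
def ipT {n m : ℕ} (y z : Triple n m) : ℝ :=
  ip y.1 z.1 + ip y.2.1 z.2.1 + ip y.2.2 z.2.2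

/-- Euclidean norm on the triple space. -/
def nrmT {n m : ℕ} (y : Triple n m) : ℝ := Real.sqrt (ipT y y)

/-- Ω = ℝ₊ⁿ × ℝ₊ⁿ × ℝ₊ᵐ. -/
def Om (n m : ℕ) : Set (Triple n m) :=
  {y | (∀ j, 0 ≤ y.1 j) ∧ (∀ j, 0 ≤ y.2.1 j) ∧ (∀ i, 0 ≤ y.2.2 i)}

/-- The operator g(x, λ, v) = ((I − A)ᵀλ − p(x) − Bᵀv, c(λ) − (I − A)x, Bx − r(v)). -/
def gOp {n m : ℕ} (A : Matrix (Fin n) (Fin n) ℝ) (B : Matrix (Fin m) (Fin n) ℝ)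
    (p c : Vec n → Vec n) (r : Vec m → Vec m) (y : Triple n m) : Triple n m :=
  ((1 - A)ᵀ *ᵥ y.2.1 - p y.1 - Bᵀ *ᵥ y.2.2,
   c y.2.1 - (1 - A) *ᵥ y.1,
   B *ᵥ y.1 - r y.2.2)

/-- P_Ω : componentwise positive part (Euclidean projection onto Ω). -/
def projOm {n m : ℕ} (y : Triple n m) : Triple n m :=
  (fun j => max (y.1 j) 0, fun j => max (y.2.1 j) 0, fun i => max (y.2.2 i) 0)

section Orthant

variable {ι R : Type*} [Fintype ι] [Ring R] [PartialOrder R] [IsOrderedRing R] {g z : ι → R}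

theorem nonpos_of_forall_dotProduct_sub_nonpos (hz : 0 ≤ z)
    (h : ∀ z' : ι → R, 0 ≤ z' → g ⬝ᵥ (z' - z) ≤ 0) : g ≤ 0 := by
  classical
  intro i
  simpa using h (z + Pi.single i 1) (add_nonneg hz (Pi.single_nonneg.2 zero_le_one))

theorem dotProduct_eq_zero_of_forall_dotProduct_sub_nonpos (hz : 0 ≤ z)
    (h : ∀ z' : ι → R, 0 ≤ z' → g ⬝ᵥ (z' - z) ≤ 0) : g ⬝ᵥ z = 0 := by
  have h_double : g ⬝ᵥ z ≤ 0 := by simpa using h (z + z) (add_nonneg hz hz)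
  have h_zero : 0 ≤ g ⬝ᵥ z := by simpa using h 0 le_rfl
  exact le_antisymm h_double h_zero

end Orthant

section SymmetricLP

variable {ι κ R : Type*} [Fintype ι] [Fintype κ] [CommRing R]
  {M : Matrix κ ι R} {q x : ι → R} {b w : κ → R}

theorem transpose_mulVec_dotProduct (M : Matrix κ ι R) (w : κ → R) (x : ι → R) :
    (Mᵀ *ᵥ w) ⬝ᵥ x = (M *ᵥ x) ⬝ᵥ w := by
  rw [dotProduct_comm, dotProduct_transpose_mulVec, dotProduct_comm]

/-- The operator `(Mᵀ w - q, b - M x)` of the linear program `min {⟨q, x⟩ : M x ≥ b, x ≥ 0}`, whose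
variational inequality over the orthant is the optimality system of the program. Its blocks are
`-∂/∂x` and `∂/∂w` of the Lagrangian `⟨q, x⟩ + ⟨w, b - M x⟩`. -/
def lagrangianOp (M : Matrix κ ι R) (q : ι → R) (b : κ → R) (x : ι → R) (w : κ → R) :
    ι ⊕ κ → R :=
  Sum.elim (Mᵀ *ᵥ w - q) (b - M *ᵥ x)

theorem lagrangianOp_dotProduct_self :
    lagrangianOp M q b x w ⬝ᵥ Sum.elim x w = b ⬝ᵥ w - q ⬝ᵥ x := by
  rw [lagrangianOp, sumElim_dotProduct_sumElim, sub_dotProduct, sub_dotProduct,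
    transpose_mulVec_dotProduct]
  ring

variable [PartialOrder R]

/-- The feasible set of the primal linear program `min {⟨q, X⟩ : M X ≥ b, X ≥ 0}` in symmetric
form. -/
def primalFeasible (M : Matrix κ ι R) (b : κ → R) : Set (ι → R) :=
  {X | b ≤ M *ᵥ X ∧ 0 ≤ X}

/-- The feasible set of the dual linear program `max {⟨b, W⟩ : Mᵀ W ≤ q, W ≥ 0}` in symmetric
form. -/
def dualFeasible (M : Matrix κ ι R) (q : ι → R) : Set (κ → R) :=
  {W | Mᵀ *ᵥ W ≤ q ∧ 0 ≤ W}

variable [IsOrderedRing R]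

theorem weak_duality (hx : x ∈ primalFeasible M b) (hw : w ∈ dualFeasible M q) :
    b ⬝ᵥ w ≤ q ⬝ᵥ x :=
  calc
    b ⬝ᵥ w ≤ (M *ᵥ x) ⬝ᵥ w := dotProduct_le_dotProduct_of_nonneg_right hx.1 hw.2
    _ = (Mᵀ *ᵥ w) ⬝ᵥ x := (transpose_mulVec_dotProduct M w x).symm
    _ ≤ q ⬝ᵥ x := dotProduct_le_dotProduct_of_nonneg_right hw.1 hx.2

theorem isMinOn_primalFeasible_of_dotProduct_eq (hw : w ∈ dualFeasible M q)
    (h_gap : b ⬝ᵥ w = q ⬝ᵥ x) : IsMinOn (q ⬝ᵥ ·) (primalFeasible M b) x :=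
  fun _ hX ↦ h_gap.symm.trans_le (weak_duality hX hw)

theorem isMaxOn_dualFeasible_of_dotProduct_eq (hx : x ∈ primalFeasible M b)
    (h_gap : b ⬝ᵥ w = q ⬝ᵥ x) : IsMaxOn (b ⬝ᵥ ·) (dualFeasible M q) w :=
  fun _ hW ↦ (weak_duality hx hW).trans_eq h_gap.symm

theorem primal_dual_optimal_of_variational_inequality (hx : 0 ≤ x) (hw : 0 ≤ w)
    (h : ∀ z, 0 ≤ z → lagrangianOp M q b x w ⬝ᵥ (z - Sum.elim x w) ≤ 0) :
    (x ∈ primalFeasible M b ∧ IsMinOn (q ⬝ᵥ ·) (primalFeasible M b) x) ∧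
      w ∈ dualFeasible M q ∧ IsMaxOn (b ⬝ᵥ ·) (dualFeasible M q) w := by
  have hxw : 0 ≤ Sum.elim x w := Sum.forall.2 ⟨hx, hw⟩
  obtain ⟨h_dual, h_primal⟩ := Sum.forall.1 (nonpos_of_forall_dotProduct_sub_nonpos hxw h)
  have hx_mem : x ∈ primalFeasible M b := ⟨sub_nonpos.1 h_primal, hx⟩
  have hw_mem : w ∈ dualFeasible M q := ⟨sub_nonpos.1 h_dual, hw⟩
  have h_gap : b ⬝ᵥ w = q ⬝ᵥ x := by
    rw [← sub_eq_zero, ← lagrangianOp_dotProduct_self (M := M)]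
    exact dotProduct_eq_zero_of_forall_dotProduct_sub_nonpos hxw h
  exact ⟨⟨hx_mem, isMinOn_primalFeasible_of_dotProduct_eq hw_mem h_gap⟩,
    hw_mem, isMaxOn_dualFeasible_of_dotProduct_eq hx_mem h_gap⟩

end SymmetricLP

section BlockLP

variable {ι κ μ R : Type*} [CommRing R]

theorem mem_primalFeasible_fromRows_neg [Fintype ι] [PartialOrder R] [IsOrderedRing R]
    {M : Matrix κ ι R} {B : Matrix μ ι R} {X : ι → R} {c : κ → R} {r : μ → R} :
    X ∈ primalFeasible (fromRows M (-B)) (Sum.elim c (-r)) ↔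
      (c ≤ M *ᵥ X ∧ B *ᵥ X ≤ r) ∧ 0 ≤ X := by
  rw [primalFeasible, Set.mem_ofPred_eq, fromRows_mulVec, neg_mulVec, Sum.elim_le_elim_iff,
    neg_le_neg_iff]

variable [Fintype κ] [Fintype μ]

theorem transpose_fromRows_neg_mulVec_sumElim (M : Matrix κ ι R) (B : Matrix μ ι R)
    (l : κ → R) (v : μ → R) :
    (fromRows M (-B))ᵀ *ᵥ Sum.elim l v = Mᵀ *ᵥ l - Bᵀ *ᵥ v := by
  rw [transpose_fromRows, fromCols_mulVec_sumElim, transpose_neg, neg_mulVec, sub_eq_add_neg]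

theorem mem_dualFeasible_fromRows_neg [PartialOrder R] {M : Matrix κ ι R} {B : Matrix μ ι R}
    {p : ι → R} {L : κ → R} {V : μ → R} :
    Sum.elim L V ∈ dualFeasible (fromRows M (-B)) p ↔
      Mᵀ *ᵥ L - Bᵀ *ᵥ V ≤ p ∧ 0 ≤ L ∧ 0 ≤ V := by
  rw [dualFeasible, Set.mem_ofPred_eq, transpose_fromRows_neg_mulVec_sumElim]
  exact and_congr_right' Sum.forall

theorem sumElim_neg_dotProduct_sumElim (c l : κ → R) (r v : μ → R) :
    Sum.elim c (-r) ⬝ᵥ Sum.elim l v = c ⬝ᵥ l - r ⬝ᵥ v := by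
  rw [sumElim_dotProduct_sumElim, neg_dotProduct, sub_eq_add_neg]

variable [Fintype ι]

theorem lagrangianOp_fromRows_neg (M : Matrix κ ι R) (B : Matrix μ ι R) (p x : ι → R)
    (c l : κ → R) (r v : μ → R) :
    lagrangianOp (fromRows M (-B)) p (Sum.elim c (-r)) x (Sum.elim l v) =
      Sum.elim (Mᵀ *ᵥ l - p - Bᵀ *ᵥ v) (Sum.elim (c - M *ᵥ x) (B *ᵥ x - r)) := by
  rw [lagrangianOp, transpose_fromRows_neg_mulVec_sumElim, sub_right_comm, fromRows_mulVec,
    neg_mulVec, ← Sum.elim_sub_sub, neg_sub_neg]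

theorem stmt1_general [PartialOrder R] [IsOrderedRing R] (M : Matrix κ ι R) (B : Matrix μ ι R)
    (p x : ι → R) (c l : κ → R) (r v : μ → R) (hx : 0 ≤ x) (hl : 0 ≤ l) (hv : 0 ≤ v)
    (hVI : ∀ X : ι → R, 0 ≤ X → ∀ L : κ → R, 0 ≤ L → ∀ V : μ → R, 0 ≤ V →
      (Mᵀ *ᵥ l - p - Bᵀ *ᵥ v) ⬝ᵥ (X - x) + (c - M *ᵥ x) ⬝ᵥ (L - l) +
        (B *ᵥ x - r) ⬝ᵥ (V - v) ≤ 0) :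
    (c ≤ M *ᵥ x ∧ B *ᵥ x ≤ r ∧ 0 ≤ x ∧
      ∀ X : ι → R, c ≤ M *ᵥ X → B *ᵥ X ≤ r → 0 ≤ X → p ⬝ᵥ x ≤ p ⬝ᵥ X) ∧
    (Mᵀ *ᵥ l - Bᵀ *ᵥ v ≤ p ∧ 0 ≤ l ∧ 0 ≤ v ∧
      ∀ (L : κ → R) (V : μ → R), Mᵀ *ᵥ L - Bᵀ *ᵥ V ≤ p → 0 ≤ L → 0 ≤ V →
        c ⬝ᵥ L - r ⬝ᵥ V ≤ c ⬝ᵥ l - r ⬝ᵥ v) := by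
  have hVI_block : ∀ z, 0 ≤ z →
      lagrangianOp (fromRows M (-B)) p (Sum.elim c (-r)) x (Sum.elim l v) ⬝ᵥ
        (z - Sum.elim x (Sum.elim l v)) ≤ 0 := by
    intro z hz
    obtain ⟨X, W, rfl⟩ : ∃ X W, z = Sum.elim X W := ⟨_, _, (Sum.elim_comp_inl_inr z).symm⟩
    obtain ⟨L, V, rfl⟩ : ∃ L V, W = Sum.elim L V := ⟨_, _, (Sum.elim_comp_inl_inr W).symm⟩
    obtain ⟨hX, hW⟩ := Sum.forall.1 hz
    obtain ⟨hL, hV⟩ := Sum.forall.1 hW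
    rw [lagrangianOp_fromRows_neg, ← Sum.elim_sub_sub, ← Sum.elim_sub_sub,
      sumElim_dotProduct_sumElim, sumElim_dotProduct_sumElim, ← add_assoc]
    exact hVI X hX L hL V hV
  obtain ⟨⟨hx_mem, hx_min⟩, hlv_mem, hlv_max⟩ :=
    primal_dual_optimal_of_variational_inequality hx (Sum.forall.2 ⟨hl, hv⟩) hVI_block
  obtain ⟨⟨hcx, hrx⟩, -⟩ := mem_primalFeasible_fromRows_neg.1 hx_mem
  refine ⟨⟨hcx, hrx, hx, fun X hcX hrX hX ↦
    hx_min (mem_primalFeasible_fromRows_neg.2 ⟨⟨hcX, hrX⟩, hX⟩)⟩,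
    (mem_dualFeasible_fromRows_neg.1 hlv_mem).1, hl, hv, fun L V hLV hL hV ↦ ?_⟩
  rw [← sumElim_neg_dotProduct_sumElim, ← sumElim_neg_dotProduct_sumElim]
  exact hlv_max (mem_dualFeasible_fromRows_neg.2 ⟨hLV, hL, hV⟩)

end BlockLP

/-- if y* = (x*, λ*, v*) ∈ Ω solves the variational inequality, then x*
minimizes the primal LP and (λ*, v*) maximizes the dual LP. -/
theorem stmt1 {n m : ℕ} (hn : 0 < n) (hm : 0 < m)
    (A : Matrix (Fin n) (Fin n) ℝ) (B : Matrix (Fin m) (Fin n) ℝ)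
    (p c : Vec n → Vec n) (r : Vec m → Vec m)
    (xs lams : Vec n) (vs : Vec m)
    (hOm : (xs, lams, vs) ∈ Om n m)
    (hVI : ∀ y ∈ Om n m, ipT (gOp A B p c r (xs, lams, vs)) (y - (xs, lams, vs)) ≤ 0) :
    -- x* is feasible for the primal LP
    ((∀ j, c lams j ≤ ((1 - A) *ᵥ xs) j) ∧ (∀ i, (B *ᵥ xs) i ≤ r vs i) ∧ (∀ j, 0 ≤ xs j) ∧
    -- x* minimizes ⟨p(x*), X⟩ over the primal feasible set
     (∀ X : Vec n, (∀ j, c lams j ≤ ((1 - A) *ᵥ X) j) → (∀ i, (B *ᵥ X) i ≤ r vs i) →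
      (∀ j, 0 ≤ X j) → ip (p xs) xs ≤ ip (p xs) X)) ∧
    -- (λ*, v*) is feasible for the dual LP
    ((∀ j, ((1 - A)ᵀ *ᵥ lams) j - (Bᵀ *ᵥ vs) j ≤ p xs j) ∧
     (∀ j, 0 ≤ lams j) ∧ (∀ i, 0 ≤ vs i) ∧
    -- (λ*, v*) maximizes ⟨c(λ*), Λ⟩ − ⟨r(v*), V⟩ over the dual feasible set
     (∀ (Lam : Vec n) (V : Vec m), (∀ j, ((1 - A)ᵀ *ᵥ Lam) j - (Bᵀ *ᵥ V) j ≤ p xs j) →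
      (∀ j, 0 ≤ Lam j) → (∀ i, 0 ≤ V i) →
      ip (c lams) Lam - ip (r vs) V ≤ ip (c lams) lams - ip (r vs) vs)) :=
  stmt1_general (1 - A) B (p xs) xs (c lams) lams (r vs) vs hOm.1 hOm.2.1 hOm.2.2
    fun X hX L hL V hV ↦ hVI (X, L, V) ⟨hX, hL, hV⟩
end
end

section
/- (Theorem 2) Suppose p, c, r are continuous and there exist α > 0, β > 0, γ > 0 such that ⟨p(x₁) − p(x₂), x₁ − x₂⟩ ≥ α‖x₁ − x₂‖² for all x₁, x₂ ∈ ℝ₊ⁿ, ⟨c(λ₁) − c(λ₂), λ₁ − λ₂⟩ ≤ −β‖λ₁ − λ₂‖² for all λ₁, λ₂ ∈ ℝ₊ⁿ, and ⟨r(v₁) − r(v₂), v₁ − v₂⟩ ≥ γ‖v₁ − v₂‖² for all v₁, v₂ ∈ ℝ₊ᵐ. Then there exists a unique y* = (x*, λ*, v*) ∈ Ω such that ⟨g(y*), y − y*⟩ ≤ 0 for all y ∈ Ω. -/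
open Matrix Filter
open scoped BigOperators

noncomputable section

/-!
Along differences of points the coupling terms of `g` cancel, since each matrix occurs together
with minus its transpose; hence `-g` is strongly monotone as soon as `p`, `-c` and `r` are.
For a strongly monotone `F` on a closed convex set `K`, the points `u` with
`σ / 2 * ‖y - u‖ ^ 2 ≤ F y (y - u)` form a bounded closed set for each `y ∈ K`. Finitely many
of these sets meet in `K`, because a matrix game whose payoff is nonnegative whenever both players
use the same mixed strategy has nonnegative value, so by compactness they all meet. Minty's trick
(test with `u + t • (y - u)` and let `t → 0`) turns a common point into a solution of the
variational inequality.
-/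

section Minimax

variable {ι : Type*} [Fintype ι]

lemma dotProduct_mulVec_self_nonneg {M : Matrix ι ι ℝ} (hM : ∀ i j, 0 ≤ M i j + M j i)
    {w : ι → ℝ} (hw : 0 ≤ w) : 0 ≤ w ⬝ᵥ M *ᵥ w := by
  have hsymm : 0 ≤ w ⬝ᵥ (M + Mᵀ) *ᵥ w :=
    dotProduct_nonneg_of_nonneg hw fun i ↦
      dotProduct_nonneg_of_nonneg (fun j ↦ hM i j) hw
  have htranspose : w ⬝ᵥ Mᵀ *ᵥ w = w ⬝ᵥ M *ᵥ w := by
    rw [mulVec_transpose, dotProduct_comm, dotProduct_mulVec]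
  rw [add_mulVec, dotProduct_add, htranspose] at hsymm
  linarith

lemma exists_mem_stdSimplex_mulVec_nonneg [Nonempty ι] {M : Matrix ι ι ℝ}
    (hM : ∀ w ∈ stdSimplex ℝ ι, 0 ≤ w ⬝ᵥ M *ᵥ w) :
    ∃ w ∈ stdSimplex ℝ ι, 0 ≤ M *ᵥ w := by
  classical
  let b := Matrix.toBilin' M
  have hconvex := convex_stdSimplex ℝ ι
  have hcompact := isCompact_stdSimplex ℝ ι
  have hcont (f : (ι → ℝ) →ₗ[ℝ] ℝ) : Continuous f := f.continuous_of_finiteDimensional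
  have hne : (stdSimplex ℝ ι).Nonempty := ⟨_, single_mem_stdSimplex ℝ (Classical.arbitrary ι)⟩
  obtain ⟨z, hz, w, hw, hsaddle⟩ := Sion.exists_isSaddlePointOn (f := fun z w ↦ b z w)
    hne hconvex hcompact
    (fun w _ ↦ (hcont (b.flip w)).lowerSemicontinuous.lowerSemicontinuousOn _)
    (fun w _ ↦ ((b.flip w).convexOn hconvex).quasiconvexOn)
    hconvex hne hcompact
    (fun z _ ↦ (hcont (b z)).upperSemicontinuous.upperSemicontinuousOn _)
    (fun z _ ↦ ((b z).concaveOn hconvex).quasiconcaveOn)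
  refine ⟨w, hw, fun i ↦ ?_⟩
  calc 0 ≤ b z z := by simpa only [b, Matrix.toBilin'_apply'] using hM z hz
    _ ≤ b (Pi.single i 1) w := hsaddle _ (single_mem_stdSimplex ℝ i) z hz
    _ = (M *ᵥ w) i := by
      rw [Matrix.toBilin'_apply', single_one_dotProduct]

end Minimax

section VariationalInequality

variable {E : Type*} [NormedAddCommGroup E] [NormedSpace ℝ E]

/-- Strong monotonicity with modulus `σ` on `K` of a map from a normed space to its dual.
The modulus multiplies the squared norm, with no factor `1 / 2`. -/
def StronglyMonotoneOn (σ : ℝ) (F : E → StrongDual ℝ E) (K : Set E) : Prop :=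
  ∀ ⦃x⦄, x ∈ K → ∀ ⦃y⦄, y ∈ K → σ * ‖x - y‖ ^ 2 ≤ (F x - F y) (x - y)

/-- Solutions of the (Stampacchia) variational inequality for the map `F` on the set `K`. -/
def IsVariationalSolution (F : E → StrongDual ℝ E) (K : Set E) (u : E) : Prop :=
  u ∈ K ∧ ∀ y ∈ K, 0 ≤ F u (y - u)

/-- The points `u` satisfying the Minty inequality, strengthened by the quadratic term with
modulus `τ`, against a single test point `y` at which the operator takes the value `φ`. -/
def mintySet (τ : ℝ) (φ : StrongDual ℝ E) (y : E) : Set E :=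
  {u | τ * ‖y - u‖ ^ 2 ≤ φ (y - u)}

lemma isClosed_mintySet (τ : ℝ) (φ : StrongDual ℝ E) (y : E) : IsClosed (mintySet τ φ y) :=
  isClosed_le (by fun_prop) (by fun_prop)

lemma mintySet_subset_closedBall {τ : ℝ} (hτ : 0 < τ) (φ : StrongDual ℝ E) (y : E) :
    mintySet τ φ y ⊆ Metric.closedBall y (‖φ‖ / τ) := by
  intro u (hu : τ * ‖y - u‖ ^ 2 ≤ φ (y - u))
  have hbound : τ * ‖y - u‖ ^ 2 ≤ ‖φ‖ * ‖y - u‖ :=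
    hu.trans ((le_abs_self _).trans (φ.le_opNorm _))
  rw [mem_closedBall_iff_norm', le_div_iff₀' hτ]
  rcases (norm_nonneg (y - u)).eq_or_lt with hzero | hpos
  · simp only [← hzero, mul_zero, norm_nonneg]
  · exact le_of_mul_le_mul_right (by linarith) hpos

lemma convexOn_mul_norm_sub_sq_sub {τ : ℝ} (hτ : 0 ≤ τ) (φ : StrongDual ℝ E) (y : E) :
    ConvexOn ℝ Set.univ fun u ↦ τ * ‖y - u‖ ^ 2 - φ (y - u) := by
  have hdist : ConvexOn ℝ Set.univ fun u ↦ ‖y - u‖ := by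
    simpa only [dist_eq_norm'] using convexOn_univ_dist y
  have hφ : ConcaveOn ℝ Set.univ fun u ↦ φ (y - u) := by
    simp only [map_sub]
    exact (concaveOn_const (φ y) convex_univ).sub (φ.toLinearMap.convexOn convex_univ)
  exact ((hdist.pow (fun _ _ ↦ norm_nonneg _) 2).smul hτ).sub hφ

lemma exists_mem_convexHull_forall_mem_mintySet {ι : Type*} [Finite ι] [Nonempty ι]
    {x : ι → E} {φ : ι → StrongDual ℝ E} {σ : ℝ} (hσ : 0 ≤ σ)
    (hφ : ∀ i j, σ * ‖x i - x j‖ ^ 2 ≤ (φ i - φ j) (x i - x j)) :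
    ∃ u ∈ convexHull ℝ (Set.range x), ∀ i, u ∈ mintySet (σ / 2) (φ i) (x i) := by
  cases nonempty_fintype ι
  let gap (i : ι) (u : E) : ℝ := σ / 2 * ‖x i - u‖ ^ 2 - φ i (x i - u)
  have hgap (i j) : 0 ≤ -gap i (x j) + -gap j (x i) := by
    have hneg : φ j (x j - x i) = -φ j (x i - x j) := by rw [← map_neg, neg_sub]
    have hij := hφ i j
    rw [_root_.sub_apply] at hij
    simp only [gap, norm_sub_rev (x j) (x i), hneg]
    linarith
  obtain ⟨w, hw, hgap_nonpos⟩ := exists_mem_stdSimplex_mulVec_nonneg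
    (M := Matrix.of fun i j ↦ -gap i (x j))
    fun w hw ↦ dotProduct_mulVec_self_nonneg hgap hw.1
  refine ⟨∑ j, w j • x j, (convex_convexHull ℝ _).sum_mem (fun j _ ↦ hw.1 j) hw.2
    fun j _ ↦ subset_convexHull ℝ _ (Set.mem_range_self j), fun i ↦ ?_⟩
  suffices gap i (∑ j, w j • x j) ≤ 0 from sub_nonpos.1 this
  calc gap i (∑ j, w j • x j) ≤ ∑ j, w j • gap i (x j) :=
        (convexOn_mul_norm_sub_sq_sub (by positivity) (φ i) (x i)).map_sum_le
          (fun j _ ↦ hw.1 j) hw.2 fun _ _ ↦ Set.mem_univ _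
    _ = -(Matrix.of (fun i j ↦ -gap i (x j)) *ᵥ w) i := by
        simp [mulVec, dotProduct, mul_comm]
    _ ≤ 0 := neg_nonpos.2 (hgap_nonpos i)

variable {F : E → StrongDual ℝ E} {K : Set E} {σ : ℝ}

lemma StronglyMonotoneOn.exists_forall_mem_mintySet [FiniteDimensional ℝ E]
    (hF : StronglyMonotoneOn σ F K) (hσ : 0 < σ) (hK : Convex ℝ K) (hKc : IsClosed K)
    (hKn : K.Nonempty) : ∃ u ∈ K, ∀ y ∈ K, u ∈ mintySet (σ / 2) (F y) y := by
  classical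
  obtain ⟨y₀, hy₀⟩ := hKn
  let S (y : K) : Set E := mintySet (σ / 2) (F y) y
  have hcompact : IsCompact (K ∩ S ⟨y₀, hy₀⟩) :=
    (isCompact_closedBall _ _).of_isClosed_subset (hKc.inter (isClosed_mintySet _ _ _))
      (Set.inter_subset_right.trans (mintySet_subset_closedBall (half_pos hσ) _ _))
  have hfinite (t : Finset K) : (K ∩ S ⟨y₀, hy₀⟩ ∩ ⋂ y ∈ t, S y).Nonempty := by
    let T : Finset K := insert ⟨y₀, hy₀⟩ t
    have : Nonempty T := ⟨⟨_, Finset.mem_insert_self _ _⟩⟩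
    obtain ⟨u, hu, hmem⟩ := exists_mem_convexHull_forall_mem_mintySet
      (x := fun y : T ↦ ((y : K) : E)) (φ := fun y ↦ F y) hσ.le
      fun i j ↦ hF i.1.2 j.1.2
    have huK : u ∈ K := convexHull_min (Set.range_subset_iff.2 fun y ↦ y.1.2) hK hu
    exact ⟨u, ⟨huK, hmem ⟨_, Finset.mem_insert_self _ _⟩⟩,
      Set.mem_iInter₂.2 fun y hy ↦ hmem ⟨y, Finset.mem_insert_of_mem hy⟩⟩
  obtain ⟨u, ⟨huK, -⟩, hu⟩ := hcompact.inter_iInter_nonempty S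
    (fun _ ↦ isClosed_mintySet _ _ _) hfinite
  exact ⟨u, huK, fun y hy ↦ Set.mem_iInter.1 hu ⟨y, hy⟩⟩

lemma isVariationalSolution_of_forall_nonneg (hK : Convex ℝ K)
    (hF : ∀ v, ContinuousOn (fun x ↦ F x v) K) {u : E} (hu : u ∈ K)
    (hminty : ∀ y ∈ K, 0 ≤ F y (y - u)) : IsVariationalSolution F K u := by
  refine ⟨hu, fun y hy ↦ ?_⟩
  let z (t : ℝ) : E := u + t • (y - u)
  have hzK : Set.MapsTo z (Set.Icc 0 1) K := fun t ht ↦ hK.add_smul_sub_mem hu hy ht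
  have hcont : ContinuousOn (fun t ↦ F (z t) (y - u)) (Set.Icc 0 1) :=
    (hF (y - u)).comp (by fun_prop) hzK
  have hpos : ∀ t ∈ Set.Ioc (0 : ℝ) 1, 0 ≤ F (z t) (y - u) := fun t ht ↦ by
    have hzt := hminty (z t) (hzK (Set.Ioc_subset_Icc_self ht))
    rw [add_sub_cancel_left, map_smul, smul_eq_mul] at hzt
    exact nonneg_of_mul_nonneg_right hzt ht.1
  have hlim : Tendsto (fun t ↦ F (z t) (y - u)) (nhdsWithin 0 (Set.Ioc 0 1))
      (nhds (F u (y - u))) := by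
    simpa [z] using ((hcont 0 (by simp)).mono Set.Ioc_subset_Icc_self).tendsto
  have : (nhdsWithin (0 : ℝ) (Set.Ioc 0 1)).NeBot := by
    rw [nhdsWithin_Ioc_eq_nhdsGT one_pos]
    infer_instance
  exact ge_of_tendsto hlim (eventually_nhdsWithin_of_forall hpos)

lemma StronglyMonotoneOn.eq_of_isVariationalSolution (hF : StronglyMonotoneOn σ F K) (hσ : 0 < σ)
    {u v : E} (hu : IsVariationalSolution F K u) (hv : IsVariationalSolution F K v) : u = v := by
  have huv := hu.2 v hv.1
  have hvu := hv.2 u hu.1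
  have hmono := hF hu.1 hv.1
  rw [← neg_sub, map_neg] at huv
  rw [_root_.sub_apply] at hmono
  have hsq : ‖u - v‖ ^ 2 ≤ 0 := nonpos_of_mul_nonpos_right (by linarith) hσ
  rwa [sq_nonpos_iff, norm_sub_eq_zero_iff] at hsq

theorem StronglyMonotoneOn.existsUnique_isVariationalSolution [FiniteDimensional ℝ E]
    (hF : StronglyMonotoneOn σ F K) (hσ : 0 < σ) (hK : Convex ℝ K) (hKc : IsClosed K)
    (hKn : K.Nonempty) (hFc : ∀ v, ContinuousOn (fun x ↦ F x v) K) :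
    ∃! u, IsVariationalSolution F K u := by
  obtain ⟨u, huK, hu⟩ := hF.exists_forall_mem_mintySet hσ hK hKc hKn
  have hsol : IsVariationalSolution F K u :=
    isVariationalSolution_of_forall_nonneg hK hFc huK
      fun y hy ↦ le_trans (by positivity) (hu y hy)
  exact ⟨u, hsol, fun v hv ↦ hF.eq_of_isVariationalSolution hσ hv hsol⟩

end VariationalInequality

section Triple

lemma ip_eq_dotProduct {k : ℕ} (u v : Vec k) : ip u v = u ⬝ᵥ v := rfl

lemma ip_self_nonneg {k : ℕ} (u : Vec k) : 0 ≤ ip u u :=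
  Finset.sum_nonneg fun i _ ↦ mul_self_nonneg (u i)

lemma nrm_sq {k : ℕ} (u : Vec k) : nrm u ^ 2 = ip u u :=
  Real.sq_sqrt (ip_self_nonneg u)

lemma norm_le_nrm {k : ℕ} (u : Vec k) : ‖u‖ ≤ nrm u := by
  refine (pi_norm_le_iff_of_nonneg (Real.sqrt_nonneg _)).2 fun i ↦ Real.abs_le_sqrt ?_
  rw [sq]
  exact Finset.single_le_sum (f := fun i ↦ u i * u i) (fun i _ ↦ mul_self_nonneg (u i))
    (Finset.mem_univ i)

variable {n m : ℕ}

lemma norm_le_nrmT (y : Triple n m) : ‖y‖ ≤ nrmT y := by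
  have hx := ip_self_nonneg y.1
  have hl := ip_self_nonneg y.2.1
  have hv := ip_self_nonneg y.2.2
  refine norm_prod_le_iff.2 ⟨(norm_le_nrm y.1).trans ?_,
    norm_prod_le_iff.2 ⟨(norm_le_nrm y.2.1).trans ?_, (norm_le_nrm y.2.2).trans ?_⟩⟩ <;>
  · refine Real.sqrt_le_sqrt ?_
    rw [ipT]
    linarith

lemma nrmT_sq (y : Triple n m) : nrmT y ^ 2 = nrm y.1 ^ 2 + nrm y.2.1 ^ 2 + nrm y.2.2 ^ 2 := by
  simp only [nrm_sq]
  exact Real.sq_sqrt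
    (add_nonneg (add_nonneg (ip_self_nonneg _) (ip_self_nonneg _)) (ip_self_nonneg _))

variable (n m) in
/-- The inner product of triples as a map `w ↦ ⟨w, ·⟩` into the dual space. Since the product
carries the sup norm, variational inequalities are treated in the dual pairing of a normed space,
which avoids a Euclidean copy of the triples. -/
def ipTDual : Triple n m →L[ℝ] StrongDual ℝ (Triple n m) :=
  LinearMap.toContinuousBilinearMap <|
    (dotProductBilin ℝ ℝ).compl₁₂ (.fst ℝ _ _) (.fst ℝ _ _) +
      (dotProductBilin ℝ ℝ).compl₁₂ (.fst ℝ _ _ ∘ₗ .snd ℝ _ _) (.fst ℝ _ _ ∘ₗ .snd ℝ _ _) +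
      (dotProductBilin ℝ ℝ).compl₁₂ (.snd ℝ _ _ ∘ₗ .snd ℝ _ _) (.snd ℝ _ _ ∘ₗ .snd ℝ _ _)

lemma ipTDual_apply (w z : Triple n m) : ipTDual n m w z = ipT w z := rfl

variable (A : Matrix (Fin n) (Fin n) ℝ) (B : Matrix (Fin m) (Fin n) ℝ)
  (p c : Vec n → Vec n) (r : Vec m → Vec m)

lemma ipT_gOp_zero_self (y : Triple n m) : ipT (gOp A B 0 0 0 y) y = 0 := by
  have htranspose {k : ℕ} (M : Matrix (Fin k) (Fin n) ℝ) (u : Vec k) :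
      (Mᵀ *ᵥ u) ⬝ᵥ y.1 = (M *ᵥ y.1) ⬝ᵥ u := by
    rw [mulVec_transpose, ← dotProduct_mulVec, dotProduct_comm]
  simp only [ipT, gOp, ip_eq_dotProduct, Pi.zero_apply, sub_zero, zero_sub, sub_dotProduct,
    neg_dotProduct, htranspose]
  ring

lemma gOp_sub_gOp (y z : Triple n m) :
    gOp A B p c r y - gOp A B p c r z =
      gOp A B 0 0 0 (y - z) + (-(p y.1 - p z.1), c y.2.1 - c z.2.1, -(r y.2.2 - r z.2.2)) := by
  refine Prod.ext ?_ (Prod.ext ?_ ?_) <;>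
  · simp only [gOp, mulVec_sub, Prod.fst_sub, Prod.snd_sub, Prod.fst_add, Prod.snd_add,
      Pi.zero_apply]
    abel

lemma ipT_gOp_sub_gOp (y z : Triple n m) :
    ipT (gOp A B p c r y - gOp A B p c r z) (y - z) =
      -ip (p y.1 - p z.1) (y.1 - z.1) + ip (c y.2.1 - c z.2.1) (y.2.1 - z.2.1)
        - ip (r y.2.2 - r z.2.2) (y.2.2 - z.2.2) := by
  rw [gOp_sub_gOp, ← ipTDual_apply, map_add, _root_.add_apply, ipTDual_apply, ipT_gOp_zero_self,
    ipTDual_apply]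
  simp only [ipT, ip_eq_dotProduct, neg_dotProduct, Prod.fst_sub, Prod.snd_sub]
  ring

variable {p c r} {X Λ : Set (Vec n)} {V : Set (Vec m)}

lemma stronglyMonotoneOn_ipTDual_neg_gOp {α β γ : ℝ} (hα : 0 ≤ α) (hβ : 0 ≤ β) (hγ : 0 ≤ γ)
    (hp : ∀ x₁ ∈ X, ∀ x₂ ∈ X, α * nrm (x₁ - x₂) ^ 2 ≤ ip (p x₁ - p x₂) (x₁ - x₂))
    (hc : ∀ l₁ ∈ Λ, ∀ l₂ ∈ Λ, ip (c l₁ - c l₂) (l₁ - l₂) ≤ -β * nrm (l₁ - l₂) ^ 2)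
    (hr : ∀ v₁ ∈ V, ∀ v₂ ∈ V, γ * nrm (v₁ - v₂) ^ 2 ≤ ip (r v₁ - r v₂) (v₁ - v₂)) :
    StronglyMonotoneOn (min α (min β γ)) (fun y ↦ ipTDual n m (-gOp A B p c r y))
      (X ×ˢ Λ ×ˢ V) := by
  rintro y ⟨hy₁, hy₂, hy₃⟩ z ⟨hz₁, hz₂, hz₃⟩
  set σ := min α (min β γ)
  have hσα : σ ≤ α := min_le_left _ _
  have hσβ : σ ≤ β := (min_le_right _ _).trans (min_le_left _ _)
  have hσγ : σ ≤ γ := (min_le_right _ _).trans (min_le_right _ _)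
  calc σ * ‖y - z‖ ^ 2 ≤ σ * nrmT (y - z) ^ 2 := by
        gcongr
        exact norm_le_nrmT _
    _ = σ * nrm (y.1 - z.1) ^ 2 + σ * nrm (y.2.1 - z.2.1) ^ 2 + σ * nrm (y.2.2 - z.2.2) ^ 2 := by
        rw [nrmT_sq, mul_add, mul_add]
        rfl
    _ ≤ α * nrm (y.1 - z.1) ^ 2 + β * nrm (y.2.1 - z.2.1) ^ 2 + γ * nrm (y.2.2 - z.2.2) ^ 2 := by
        gcongr
    _ ≤ -ipT (gOp A B p c r y - gOp A B p c r z) (y - z) := by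
        rw [ipT_gOp_sub_gOp]
        linarith [hp _ hy₁ _ hz₁, hc _ hy₂ _ hz₂, hr _ hy₃ _ hz₃]
    _ = (ipTDual n m (-gOp A B p c r y) - ipTDual n m (-gOp A B p c r z)) (y - z) := by
        rw [← map_sub, ← neg_sub', map_neg, _root_.neg_apply, ipTDual_apply]

lemma continuousOn_gOp (hp : ContinuousOn p X) (hc : ContinuousOn c Λ) (hr : ContinuousOn r V) :
    ContinuousOn (gOp A B p c r) (X ×ˢ Λ ×ˢ V) := by
  have hpX : ContinuousOn (fun y : Triple n m ↦ p y.1) (X ×ˢ Λ ×ˢ V) :=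
    hp.comp (by fun_prop) fun _ hy ↦ hy.1
  have hcΛ : ContinuousOn (fun y : Triple n m ↦ c y.2.1) (X ×ˢ Λ ×ˢ V) :=
    hc.comp (by fun_prop) fun _ hy ↦ hy.2.1
  have hrV : ContinuousOn (fun y : Triple n m ↦ r y.2.2) (X ×ˢ Λ ×ˢ V) :=
    hr.comp (by fun_prop) fun _ hy ↦ hy.2.2
  exact (((Continuous.continuousOn (by fun_prop)).sub hpX).sub
    (Continuous.continuousOn (by fun_prop))).prodMk
      ((hcΛ.sub (Continuous.continuousOn (by fun_prop))).prodMk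
        ((Continuous.continuousOn (by fun_prop)).sub hrV))

lemma isVariationalSolution_ipTDual_neg_iff {G : Triple n m → Triple n m}
    {K : Set (Triple n m)} {u : Triple n m} :
    IsVariationalSolution (fun y ↦ ipTDual n m (-G y)) K u ↔
      u ∈ K ∧ ∀ y ∈ K, ipT (G u) (y - u) ≤ 0 := by
  simp only [IsVariationalSolution, map_neg, _root_.neg_apply, ipTDual_apply, neg_nonneg]

end Triple

theorem stmt5_general {n m : ℕ}
    (A : Matrix (Fin n) (Fin n) ℝ) (B : Matrix (Fin m) (Fin n) ℝ)
    {X Λ : Set (Vec n)} {V : Set (Vec m)}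
    (hX : Convex ℝ X) (hΛ : Convex ℝ Λ) (hV : Convex ℝ V)
    (hXc : IsClosed X) (hΛc : IsClosed Λ) (hVc : IsClosed V)
    (hXn : X.Nonempty) (hΛn : Λ.Nonempty) (hVn : V.Nonempty)
    {p c : Vec n → Vec n} {r : Vec m → Vec m}
    (hpc : ContinuousOn p X) (hcc : ContinuousOn c Λ) (hrc : ContinuousOn r V)
    {α β γ : ℝ} (hα : 0 < α) (hβ : 0 < β) (hγ : 0 < γ)
    (hp : ∀ x₁ ∈ X, ∀ x₂ ∈ X, α * nrm (x₁ - x₂) ^ 2 ≤ ip (p x₁ - p x₂) (x₁ - x₂))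
    (hc : ∀ l₁ ∈ Λ, ∀ l₂ ∈ Λ, ip (c l₁ - c l₂) (l₁ - l₂) ≤ -β * nrm (l₁ - l₂) ^ 2)
    (hr : ∀ v₁ ∈ V, ∀ v₂ ∈ V, γ * nrm (v₁ - v₂) ^ 2 ≤ ip (r v₁ - r v₂) (v₁ - v₂)) :
    ∃! ys : Triple n m, ys ∈ X ×ˢ Λ ×ˢ V ∧
      ∀ y ∈ X ×ˢ Λ ×ˢ V, ipT (gOp A B p c r ys) (y - ys) ≤ 0 := by
  have hmono := stronglyMonotoneOn_ipTDual_neg_gOp A B hα.le hβ.le hγ.le hp hc hr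
  have hcont (w : Triple n m) :
      ContinuousOn (fun y ↦ ipTDual n m (-gOp A B p c r y) w) (X ×ˢ Λ ×ˢ V) := by
    have := continuousOn_gOp A B hpc hcc hrc
    fun_prop
  simpa only [isVariationalSolution_ipTDual_neg_iff] using
    hmono.existsUnique_isVariationalSolution (by positivity) (hX.prod (hΛ.prod hV))
      (hXc.prod (hΛc.prod hVc)) (hXn.prod (hΛn.prod hVn)) hcont

/-- Theorem 2: if p, c, r are continuous and strongly monotone
(increasing, decreasing, increasing respectively) on the nonnegative orthants, then the
NPCE exists and is unique, i.e. there is a unique y* ∈ Ω solving the variational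
inequality ⟨g(y*), y − y*⟩ ≤ 0 for all y ∈ Ω. -/
theorem stmt5 {n m : ℕ} (hn : 0 < n) (hm : 0 < m)
    (A : Matrix (Fin n) (Fin n) ℝ) (B : Matrix (Fin m) (Fin n) ℝ)
    (p c : Vec n → Vec n) (r : Vec m → Vec m)
    (hpc : Continuous p) (hcc : Continuous c) (hrc : Continuous r)
    (α β γ : ℝ) (hα : 0 < α) (hβ : 0 < β) (hγ : 0 < γ)
    (hp : ∀ x₁ x₂ : Vec n, (∀ j, 0 ≤ x₁ j) → (∀ j, 0 ≤ x₂ j) →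
      α * nrm (x₁ - x₂) ^ 2 ≤ ip (p x₁ - p x₂) (x₁ - x₂))
    (hc : ∀ l₁ l₂ : Vec n, (∀ j, 0 ≤ l₁ j) → (∀ j, 0 ≤ l₂ j) →
      ip (c l₁ - c l₂) (l₁ - l₂) ≤ -β * nrm (l₁ - l₂) ^ 2)
    (hr : ∀ v₁ v₂ : Vec m, (∀ i, 0 ≤ v₁ i) → (∀ i, 0 ≤ v₂ i) →
      γ * nrm (v₁ - v₂) ^ 2 ≤ ip (r v₁ - r v₂) (v₁ - v₂)) :
    ∃! ys : Triple n m, ys ∈ Om n m ∧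
      ∀ y ∈ Om n m, ipT (gOp A B p c r ys) (y - ys) ≤ 0 :=
  stmt5_general A B (convex_Ici 0) (convex_Ici 0) (convex_Ici 0) isClosed_Ici isClosed_Ici
    isClosed_Ici Set.nonempty_Ici Set.nonempty_Ici Set.nonempty_Ici hpc.continuousOn
    hcc.continuousOn hrc.continuousOn hα hβ hγ (fun x₁ h₁ x₂ h₂ ↦ hp x₁ x₂ h₁ h₂)
    (fun l₁ h₁ l₂ h₂ ↦ hc l₁ l₂ h₁ h₂) (fun v₁ h₁ v₂ h₂ ↦ hr v₁ v₂ h₁ h₂)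
end
end

section
/- (Theorem 5, part 1) Let y* ∈ Ω solve the variational inequality ⟨g(y*), y − y*⟩ ≤ 0 for all y ∈ Ω. Suppose there exists δ > 0 with ⟨g(y) − g(y*), y − y*⟩ ≤ −δ‖y − y*‖² for all y ∈ Ω, and g is L-Lipschitz on Ω: ‖g(y₁) − g(y₂)‖ ≤ L‖y₁ − y₂‖ for all y₁, y₂ ∈ Ω, with δ ≤ L. Let 0 < t < (√2·L)⁻¹, set ν(t) = 1 + 2δt − 2(tL)² and q(t) = 1 − 2δt + 4(δt)²/ν(t). Then 0 < q(t) < 1, and the extra pseudo-gradient iterates ŷ_s = P_Ω(y_s + t·g(y_s)), y_{s+1} = P_Ω(y_s + t·g(ŷ_s)) satisfy ‖y_{s+1} − y*‖ ≤ √(q(t))·‖y_s − y*‖ for every s ≥ 0. -/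
open Matrix Filter
open scoped BigOperators

noncomputable section

/-!
The projection inequalities of the predictor `u = P (y + t • G y)` and of the corrector
`z = P (y + t • G u)` add up, after Young's inequality on `2t⟪G u - G y, z - u⟫`, to
`‖z - y*‖² ≤ ‖y - y*‖² - ‖u - y‖² + t²‖G u - G y‖² + 2t⟪G u, u - y*⟫`. The Lipschitz bound controls
the third term and strong monotonicity at the solution `y*` makes the last one at most
`-2δt‖u - y*‖²`. Minimizing `α‖a‖² + β‖a + b‖²` over `a = u - y`, with `b = y - y*`,
`β = 2δt` and `α = 1 - 2(tL)² ≤ 1 - (tL)²`, leaves the factor `q = 1 - αβ / (α + β)`.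
-/

open scoped RealInnerProductSpace

/-- The contraction factor `q(t) = 1 - 2δt + 4(δt)² / ν(t)`, with `ν(t) = 1 + 2δt - 2(tL)²`, of
the extragradient method with strong monotonicity modulus `δ`, Lipschitz constant `L` and step
size `t`. -/
def extragradientFactor (δ L t : ℝ) : ℝ :=
  1 - 2 * δ * t + 4 * (δ * t) ^ 2 / (1 + 2 * δ * t - 2 * (t * L) ^ 2)

section Factor

variable {δ L t : ℝ}

lemma two_mul_sq_lt_one_of_lt_inv (ht : 0 ≤ t) (htL : t < (√2 * L)⁻¹) : 2 * (t * L) ^ 2 < 1 := by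
  have hL : 0 < √2 * L := inv_pos.mp (ht.trans_lt htL)
  have htL_one : t * (√2 * L) < 1 := (lt_div_iff₀ hL).mp (one_div (√2 * L) ▸ htL)
  calc 2 * (t * L) ^ 2 = (t * (√2 * L)) ^ 2 := by
        rw [mul_left_comm, mul_pow (√2), Real.sq_sqrt zero_le_two]
    _ < 1 := pow_lt_one₀ (mul_nonneg ht hL.le) htL_one two_ne_zero

lemma extragradientFactor_eq (hν : 1 - 2 * (t * L) ^ 2 + 2 * (δ * t) ≠ 0) :
    extragradientFactor δ L t =
      1 - (1 - 2 * (t * L) ^ 2) * (2 * (δ * t)) / (1 - 2 * (t * L) ^ 2 + 2 * (δ * t)) := by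
  have hsq : 4 * (δ * t) ^ 2 = (2 * (δ * t)) ^ 2 := by ring
  rw [extragradientFactor, hsq, mul_assoc 2 δ t, add_sub_right_comm]
  generalize 2 * (δ * t) = β at hν ⊢
  generalize 1 - 2 * (t * L) ^ 2 = α at hν ⊢
  field_simp
  ring

lemma extragradientFactor_pos (hδt : 0 ≤ δ * t) (htL : 2 * (t * L) ^ 2 < 1) :
    0 < extragradientFactor δ L t := by
  have hν : 0 < 1 - 2 * (t * L) ^ 2 + 2 * (δ * t) := by linarith
  rw [extragradientFactor_eq hν.ne', sub_pos, div_lt_one hν]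
  calc (1 - 2 * (t * L) ^ 2) * (2 * (δ * t)) ≤ 2 * (δ * t) :=
        mul_le_of_le_one_left (by positivity) (sub_le_self 1 (by positivity))
    _ < 1 - 2 * (t * L) ^ 2 + 2 * (δ * t) := lt_add_of_pos_left _ (sub_pos.mpr htL)

lemma extragradientFactor_lt_one (hδt : 0 < δ * t) (htL : 2 * (t * L) ^ 2 < 1) :
    extragradientFactor δ L t < 1 := by
  have hα : 0 < 1 - 2 * (t * L) ^ 2 := sub_pos.mpr htL
  have hβ : 0 < 2 * (δ * t) := mul_pos two_pos hδt
  rw [extragradientFactor_eq (add_pos hα hβ).ne']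
  exact sub_lt_self 1 (div_pos (mul_pos hα hβ) (add_pos hα hβ))

end Factor

section InnerProductSpace

variable {E : Type*} [SeminormedAddCommGroup E] [InnerProductSpace ℝ E]

lemma norm_sub_sq_le_of_inner_nonpos {x y z v : E} (h : ⟪y + v - z, x - z⟫ ≤ 0) :
    ‖z - x‖ ^ 2 ≤ ‖y - x‖ ^ 2 - ‖z - y‖ ^ 2 + 2 * ⟪v, z - x⟫ := by
  have hsplit : ⟪y + v - z, x - z⟫ = ⟪z - y, z - x⟫ - ⟪v, z - x⟫ := by
    rw [← inner_sub_left, ← neg_sub z x, inner_neg_right, ← inner_neg_left]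
    congr 1
    abel
  have hyx : ‖y - x‖ ^ 2 = ‖z - y‖ ^ 2 - 2 * ⟪z - y, z - x⟫ + ‖z - x‖ ^ 2 := by
    rw [← norm_sub_sq_real, sub_sub_sub_cancel_left, norm_sub_rev]
  linarith

lemma two_mul_inner_le_norm_sq_add_norm_sq (a b : E) : 2 * ⟪a, b⟫ ≤ ‖a‖ ^ 2 + ‖b‖ ^ 2 := by
  linarith [norm_sub_sq_real a b, sq_nonneg ‖a - b‖]

-- The constant is sharp: equality holds at `a = -(β / (α + β)) • b`.
lemma mul_div_add_mul_norm_sq_le {α β : ℝ} (h : 0 < α + β) (a b : E) :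
    α * β / (α + β) * ‖b‖ ^ 2 ≤ α * ‖a‖ ^ 2 + β * ‖a + b‖ ^ 2 := by
  have hsq : ‖(α + β) • a + β • b‖ ^ 2 =
      (α + β) * (α * ‖a‖ ^ 2 + β * ‖a + b‖ ^ 2) - α * β * ‖b‖ ^ 2 := by
    simp only [norm_add_sq_real, real_inner_smul_left, real_inner_smul_right, norm_smul, mul_pow,
      Real.norm_eq_abs, sq_abs]
    ring
  rw [div_mul_eq_mul_div, div_le_iff₀' h]
  linarith [sq_nonneg ‖(α + β) • a + β • b‖]

/-- `P` is a projection onto `K`, expressed by the obtuse angle criterion. For convex `K` this says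
that `P w` is a point of `K` nearest to `w`; see `norm_eq_iInf_iff_real_inner_le_zero`. -/
structure IsProjectionOnto (K : Set E) (P : E → E) : Prop where
  mem : ∀ w, P w ∈ K
  inner_nonpos : ∀ w, ∀ x ∈ K, ⟪w - P w, x - P w⟫ ≤ 0

/-- The predictor `u = P (y + t • G y)` of the extragradient method. The sign of `t` is that of an
ascent step, since the operators considered here are monotonically decreasing. -/
def extragradientPredictor (P G : E → E) (t : ℝ) (y : E) : E := P (y + t • G y)

/-- One step `y ↦ P (y + t • G u)` of the extragradient method, where `u` is the predictor at
`y`. -/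
def extragradientStep (P G : E → E) (t : ℝ) (y : E) : E :=
  P (y + t • G (extragradientPredictor P G t y))

namespace IsProjectionOnto

variable {K : Set E} {P G : E → E} {x y : E} {δ L t : ℝ}

lemma norm_extragradientStep_sub_sq_le (hP : IsProjectionOnto K P) (hx : x ∈ K) :
    ‖extragradientStep P G t y - x‖ ^ 2 ≤
      ‖y - x‖ ^ 2 - ‖extragradientPredictor P G t y - y‖ ^ 2
        + t ^ 2 * ‖G (extragradientPredictor P G t y) - G y‖ ^ 2
        + 2 * t * ⟪G (extragradientPredictor P G t y), extragradientPredictor P G t y - x⟫ := by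
  set u := extragradientPredictor P G t y
  set z := extragradientStep P G t y
  have hcorrector : ‖z - x‖ ^ 2 ≤ ‖y - x‖ ^ 2 - ‖z - y‖ ^ 2 + 2 * ⟪t • G u, z - x⟫ :=
    norm_sub_sq_le_of_inner_nonpos (hP.inner_nonpos _ x hx)
  have hpredictor : ‖u - z‖ ^ 2 ≤ ‖y - z‖ ^ 2 - ‖u - y‖ ^ 2 + 2 * ⟪t • G y, u - z⟫ :=
    norm_sub_sq_le_of_inner_nonpos (hP.inner_nonpos _ z (hP.mem _))
  have hyoung : 2 * ⟪t • (G u - G y), z - u⟫ ≤ t ^ 2 * ‖G u - G y‖ ^ 2 + ‖z - u‖ ^ 2 := by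
    simpa only [norm_smul, mul_pow, Real.norm_eq_abs, sq_abs] using
      two_mul_inner_le_norm_sq_add_norm_sq (t • (G u - G y)) (z - u)
  have hinner : ⟪t • G u, z - x⟫ + ⟪t • G y, u - z⟫ =
      ⟪t • (G u - G y), z - u⟫ + t * ⟪G u, u - x⟫ := by
    simp only [real_inner_smul_left, inner_sub_left, inner_sub_right]
    ring
  rw [norm_sub_rev y z, norm_sub_rev u z] at hpredictor
  linarith

theorem norm_extragradientStep_sub_le (hP : IsProjectionOnto K P) (hx : x ∈ K)
    (hVI : ∀ w ∈ K, ⟪G x, w - x⟫ ≤ 0)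
    (hmono : ∀ w ∈ K, ⟪G w - G x, w - x⟫ ≤ -δ * ‖w - x‖ ^ 2)
    (hlip : ∀ w₁ ∈ K, ∀ w₂ ∈ K, ‖G w₁ - G w₂‖ ≤ L * ‖w₁ - w₂‖)
    (hδ : 0 ≤ δ) (ht : 0 ≤ t) (htL : 2 * (t * L) ^ 2 < 1) (hy : y ∈ K) :
    ‖extragradientStep P G t y - x‖ ≤ √(extragradientFactor δ L t) * ‖y - x‖ := by
  have hδt : 0 ≤ δ * t := mul_nonneg hδ ht
  have hν : 0 < 1 - 2 * (t * L) ^ 2 + 2 * (δ * t) := by linarith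
  have hstep := hP.norm_extragradientStep_sub_sq_le (G := G) (t := t) (y := y) hx
  have hu : extragradientPredictor P G t y ∈ K := hP.mem _
  set u := extragradientPredictor P G t y
  have hGu : t * ⟪G u, u - x⟫ ≤ t * (-δ * ‖u - x‖ ^ 2) := by
    refine mul_le_mul_of_nonneg_left ?_ ht
    linarith [hVI u hu, hmono u hu, inner_sub_left (𝕜 := ℝ) (G u) (G x) (u - x)]
  have hGuy : t ^ 2 * ‖G u - G y‖ ^ 2 ≤ (t * L) ^ 2 * ‖u - y‖ ^ 2 := by
    rw [mul_pow, mul_assoc, ← mul_pow L]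
    gcongr
    exact hlip u hu y hy
  have hmin := mul_div_add_mul_norm_sq_le hν (u - y) (y - x)
  rw [sub_add_sub_cancel] at hmin
  have hsq : ‖extragradientStep P G t y - x‖ ^ 2 ≤ extragradientFactor δ L t * ‖y - x‖ ^ 2 := by
    rw [extragradientFactor_eq hν.ne']
    linarith [mul_nonneg (sq_nonneg (t * L)) (sq_nonneg ‖u - y‖)]
  rw [← Real.sqrt_sq (norm_nonneg (y - x)), ← Real.sqrt_mul (extragradientFactor_pos hδt htL).le]
  exact Real.le_sqrt_of_sq_le hsq

end IsProjectionOnto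

theorem stmt17_general {K : Set E} {P G : E → E} (hP : IsProjectionOnto K P) {x : E} (hx : x ∈ K)
    (hVI : ∀ w ∈ K, ⟪G x, w - x⟫ ≤ 0) {δ L : ℝ} (hδ : 0 < δ)
    (hmono : ∀ w ∈ K, ⟪G w - G x, w - x⟫ ≤ -δ * ‖w - x‖ ^ 2)
    (hlip : ∀ w₁ ∈ K, ∀ w₂ ∈ K, ‖G w₁ - G w₂‖ ≤ L * ‖w₁ - w₂‖)
    {t : ℝ} (ht : 0 < t) (htL : t < (√2 * L)⁻¹) {y : ℕ → E} (hy₀ : y 0 ∈ K)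
    (hy : ∀ s, y (s + 1) = extragradientStep P G t (y s)) :
    (0 < extragradientFactor δ L t ∧ extragradientFactor δ L t < 1) ∧
      ∀ s, ‖y (s + 1) - x‖ ≤ √(extragradientFactor δ L t) * ‖y s - x‖ := by
  have hδt : 0 < δ * t := mul_pos hδ ht
  have htL_sq : 2 * (t * L) ^ 2 < 1 := two_mul_sq_lt_one_of_lt_inv ht.le htL
  have hmem : ∀ s, y s ∈ K
    | 0 => hy₀
    | s + 1 => hy s ▸ hP.mem _
  refine ⟨⟨extragradientFactor_pos hδt.le htL_sq, extragradientFactor_lt_one hδt htL_sq⟩, ?_⟩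
  intro s
  rw [hy]
  exact hP.norm_extragradientStep_sub_le hx hVI hmono hlip hδ.le ht.le htL_sq (hmem s)

end InnerProductSpace

section Triple

variable {n m : ℕ}

/-- `ipT` as an inner product on the space of triples. -/
abbrev Triple.innerProductSpaceCore (n m : ℕ) : PreInnerProductSpace.Core ℝ (Triple n m) where
  inner := ipT
  conj_inner_symm y z := by simp [ipT, ip, mul_comm]
  re_inner_nonneg y := by
    have hip {k : ℕ} (u : Vec k) : 0 ≤ ip u u := Finset.sum_nonneg fun _ _ => mul_self_nonneg _
    exact add_nonneg (add_nonneg (hip _) (hip _)) (hip _)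
  add_left y z w := by
    simp only [ipT, ip, Prod.fst_add, Prod.snd_add, Pi.add_apply, add_mul, Finset.sum_add_distrib]
    ring
  smul_left y z a := by
    simp [ipT, ip, mul_assoc, mul_add, Finset.mul_sum]

attribute [local instance] Triple.innerProductSpaceCore

/-- The Euclidean norm `nrmT` on triples; it differs from the sup norm that `Triple n m` carries as
a product type. -/
abbrev Triple.seminormedAddCommGroup (n m : ℕ) : SeminormedAddCommGroup (Triple n m) :=
  InnerProductSpace.Core.toSeminormedAddCommGroup (𝕜 := ℝ)

attribute [local instance] Triple.seminormedAddCommGroup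

/-- The inner product space of triples, with inner product `ipT` and norm `nrmT`. -/
abbrev Triple.innerProductSpace (n m : ℕ) : InnerProductSpace ℝ (Triple n m) :=
  InnerProductSpace.ofCore (innerProductSpaceCore n m)

attribute [local instance] Triple.innerProductSpace

lemma projOm_mem_Om (w : Triple n m) : projOm w ∈ Om n m :=
  ⟨fun _ => le_max_right _ _, fun _ => le_max_right _ _, fun _ => le_max_right _ _⟩

lemma sub_max_zero_mul_sub_max_zero_nonpos {a : ℝ} (w : ℝ) (ha : 0 ≤ a) :
    (w - max w 0) * (a - max w 0) ≤ 0 := by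
  rcases le_total w 0 with hw | hw
  · simpa only [max_eq_right hw, sub_zero] using mul_nonpos_of_nonpos_of_nonneg hw ha
  · simp only [max_eq_left hw, sub_self, zero_mul, le_refl]

lemma ipT_sub_projOm_nonpos (w : Triple n m) {x : Triple n m} (hx : x ∈ Om n m) :
    ipT (w - projOm w) (x - projOm w) ≤ 0 := by
  have hblock {k : ℕ} {u v : Vec k} (hv : ∀ i, 0 ≤ v i) :
      ip (u - fun i => max (u i) 0) (v - fun i => max (u i) 0) ≤ 0 :=
    Finset.sum_nonpos fun i _ => sub_max_zero_mul_sub_max_zero_nonpos (u i) (hv i)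
  exact add_nonpos (add_nonpos (hblock hx.1) (hblock hx.2.1)) (hblock hx.2.2)

lemma isProjectionOnto_projOm : IsProjectionOnto (Om n m) projOm where
  mem := projOm_mem_Om
  inner_nonpos w _ hx := ipT_sub_projOm_nonpos w hx

end Triple

/-- Theorem 5, part 1: under strong monotonicity at y* and Lipschitz
continuity of g on Ω with δ ≤ L, for 0 < t < (√2·L)⁻¹, with ν(t) = 1 + 2δt − 2(tL)²
and q(t) = 1 − 2δt + 4(δt)²/ν(t), one has 0 < q(t) < 1 and
‖y_{s+1} − y*‖ ≤ √(q(t))·‖y_s − y*‖ for the extra pseudo-gradient iterates. -/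
theorem stmt17 {n m : ℕ} (hn : 0 < n) (hm : 0 < m)
    (A : Matrix (Fin n) (Fin n) ℝ) (B : Matrix (Fin m) (Fin n) ℝ)
    (p c : Vec n → Vec n) (r : Vec m → Vec m)
    (ys : Triple n m) (hys : ys ∈ Om n m)
    (hVI : ∀ y ∈ Om n m, ipT (gOp A B p c r ys) (y - ys) ≤ 0)
    (δ L : ℝ) (hδ : 0 < δ) (hδL : δ ≤ L)
    (hmono : ∀ y ∈ Om n m,
      ipT (gOp A B p c r y - gOp A B p c r ys) (y - ys) ≤ -δ * nrmT (y - ys) ^ 2)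
    (hlip : ∀ y₁ ∈ Om n m, ∀ y₂ ∈ Om n m,
      nrmT (gOp A B p c r y₁ - gOp A B p c r y₂) ≤ L * nrmT (y₁ - y₂))
    (t : ℝ) (ht0 : 0 < t) (ht1 : t < (Real.sqrt 2 * L)⁻¹)
    (y yh : ℕ → Triple n m) (hy0 : y 0 ∈ Om n m)
    (hyh : ∀ s : ℕ, yh s = projOm (y s + t • gOp A B p c r (y s)))
    (hiter : ∀ s : ℕ, y (s + 1) = projOm (y s + t • gOp A B p c r (yh s))) :
    (0 < 1 - 2 * δ * t + 4 * (δ * t) ^ 2 / (1 + 2 * δ * t - 2 * (t * L) ^ 2) ∧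
      1 - 2 * δ * t + 4 * (δ * t) ^ 2 / (1 + 2 * δ * t - 2 * (t * L) ^ 2) < 1) ∧
    ∀ s : ℕ, nrmT (y (s + 1) - ys) ≤
      Real.sqrt (1 - 2 * δ * t + 4 * (δ * t) ^ 2 / (1 + 2 * δ * t - 2 * (t * L) ^ 2)) *
        nrmT (y s - ys) := by
  let _ := Triple.seminormedAddCommGroup n m
  let _ := Triple.innerProductSpace n m
  exact stmt17_general isProjectionOnto_projOm hys hVI hδ hmono hlip ht0 ht1 hy0
    fun s => (hiter s).trans (hyh s ▸ rfl)
end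
end
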